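/- Let p > 2 and let N ≥ 1 be an integer. There exists exactly one function G ∈ C^1([0,1]) such that: G(r) ≥ 0 for all r ∈ [0,1]; G(1) = 1; G'(0) = 0; and the map r ↦ r^{N−1}|G'(r)|^{p−2}G'(r) is differentiable on (0,1) with derivative equal to r^{N−1}G(r)^{p−1} for every r ∈ (0,1). Moreover, this G is nondecreasing on [0,1]. -/

import Mathlib

open Real Filter Set

/-- `G ∈ C^1([0,1])` (with derivative `G'`) is a radial profile solution of the Dirichlet
problem `-Δ_p G + G^(p-1) = 0` in the unit ball of `ℝ^N` with `G = 1` on the boundary. -/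
def IsRadialDirichletLimit (p : ℝ) (N : ℕ) (G G' : ℝ → ℝ) : Prop :=
  (∀ r ∈ Set.Icc (0:ℝ) 1, HasDerivWithinAt G (G' r) (Set.Icc 0 1) r) ∧
  ContinuousOn G' (Set.Icc 0 1) ∧
  (∀ r ∈ Set.Icc (0:ℝ) 1, 0 ≤ G r) ∧
  G 1 = 1 ∧ G' 0 = 0 ∧
  ∀ r ∈ Set.Ioo (0:ℝ) 1,
    HasDerivAt (fun s => s ^ (N - 1) * (|G' s| ^ (p - 2) * G' s))
      (r ^ (N - 1) * (G r) ^ (p - 1)) r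

/-!
With `q = p - 1` and `n = N - 1`, integrating the equation twice turns it into `G = G 0 + A G`,
where `A w r = ∫₀ʳ (t⁻ⁿ ∫₀ᵗ sⁿ w(s)^q ds)^(1/q) dt` is monotone and positively homogeneous of
degree one on nonnegative functions, and `A 1 ≤ θ` with `θ = q / (q + 1) < 1`. Hence `T w = 1 + A w`
preserves `{1 ≤ w ≤ (1 - θ)⁻¹}`, and there it contracts ratios: `w ≤ (1 + δ) v` implies
`T w ≤ (1 + θ δ) (T v)`. So `T` has exactly one nonnegative fixed point `W`. By homogeneity the
solutions of `G = c + A G` with `c > 0` are the multiples `c W`, those with `c = 0` vanish, and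
`G 1 = 1` selects `c = 1 / W 1`.
-/

/-- A monotone, positively homogeneous map `A` on the cone of nonnegative continuous functions
with `A 1 ≤ θ < 1`; this is what makes `f = c + A f` uniquely solvable although `A` need not be
additive. Nothing is required of `A` off the cone. -/
structure IsSubunitalConeMap {X : Type*} [TopologicalSpace X] (A : C(X, ℝ) → C(X, ℝ)) (θ : ℝ) :
    Prop where
  monotoneOn : MonotoneOn A (Ici 0)
  map_smul : ∀ c : ℝ, 0 ≤ c → ∀ f, 0 ≤ f → A (c • f) = c • A f
  map_one_le : A 1 ≤ θ • 1
  nonneg : 0 ≤ θ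
  lt_one : θ < 1

namespace IsSubunitalConeMap

variable {X : Type*} [TopologicalSpace X] {A : C(X, ℝ) → C(X, ℝ)} {θ : ℝ}

theorem map_nonneg (h : IsSubunitalConeMap A θ) {f : C(X, ℝ)} (hf : 0 ≤ f) : 0 ≤ A f := by
  have map_zero : A 0 = 0 := by simpa using h.map_smul 0 le_rfl 0 le_rfl
  simpa only [map_zero] using h.monotoneOn (mem_Ici.2 le_rfl) hf hf

theorem map_le_of_le_smul_one (h : IsSubunitalConeMap A θ) {f : C(X, ℝ)} (hf : 0 ≤ f) {c : ℝ}
    (hc : 0 ≤ c) (hfc : f ≤ c • 1) : A f ≤ (c * θ) • 1 :=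
  calc A f ≤ A (c • 1) := h.monotoneOn hf (hf.trans hfc) hfc
    _ = c • A 1 := h.map_smul c hc 1 zero_le_one
    _ ≤ c • θ • (1 : C(X, ℝ)) := smul_le_smul_of_nonneg_left h.map_one_le hc
    _ = (c * θ) • 1 := smul_smul ..

theorem mapsTo_one_add (h : IsSubunitalConeMap A θ) :
    MapsTo (fun f ↦ 1 + A f) (Icc 1 ((1 - θ)⁻¹ • 1)) (Icc 1 ((1 - θ)⁻¹ • 1)) := by
  rintro f ⟨one_le, le⟩
  have hf : 0 ≤ f := zero_le_one.trans one_le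
  have pos : 0 < 1 - θ := sub_pos.2 h.lt_one
  refine ⟨le_add_of_nonneg_right (h.map_nonneg hf), ?_⟩
  calc 1 + A f ≤ (1 : ℝ) • 1 + ((1 - θ)⁻¹ * θ) • 1 := by
        rw [one_smul]
        gcongr
        exact h.map_le_of_le_smul_one hf (inv_nonneg.2 pos.le) le
    _ = (1 - θ)⁻¹ • 1 := by
        rw [← add_smul]
        congr 1
        field_simp
        ring

-- The constant `1` does not scale with `f`, so adding it pulls the ratio `1 + δ` towards `1`.
theorem one_add_le_smul_one_add (h : IsSubunitalConeMap A θ) {f g : C(X, ℝ)} (hf : 0 ≤ f)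
    (hg : g ∈ Icc 1 ((1 - θ)⁻¹ • 1)) {δ : ℝ} (hδ : 0 ≤ δ) (hfg : f ≤ (1 + δ) • g) :
    1 + A f ≤ (1 + θ * δ) • (1 + A g) := by
  have hg0 : 0 ≤ g := zero_le_one.trans hg.1
  have map_f_le : A f ≤ (1 + δ) • A g :=
    (h.monotoneOn hf (hf.trans hfg) hfg).trans_eq (h.map_smul _ (by positivity) g hg0)
  refine ContinuousMap.le_def.2 fun x ↦ ?_
  have f_le : A f x ≤ (1 + δ) * A g x := map_f_le x
  have g_le : 1 + A g x ≤ (1 - θ)⁻¹ := by simpa using (h.mapsTo_one_add hg).2 x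
  have g_le' : (1 - θ) * (1 + A g x) ≤ 1 := by
    rwa [mul_comm, ← le_div_iff₀ (sub_pos.2 h.lt_one), one_div]
  calc 1 + A f x ≤ 1 + A g x + δ * A g x := by linarith
    _ ≤ (1 + θ * δ) * (1 + A g x) := by linear_combination δ * g_le'

theorem iterate_one_add_le_smul (h : IsSubunitalConeMap A θ) {f g : C(X, ℝ)}
    (hf : f ∈ Icc 1 ((1 - θ)⁻¹ • 1)) (hg : g ∈ Icc 1 ((1 - θ)⁻¹ • 1)) {δ : ℝ} (hδ : 0 ≤ δ)
    (hfg : f ≤ (1 + δ) • g) (k : ℕ) :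
    (fun f ↦ 1 + A f)^[k] f ≤ (1 + θ ^ k * δ) • (fun f ↦ 1 + A f)^[k] g := by
  induction k with
  | zero => simpa using hfg
  | succ k ih =>
    have hθ := h.nonneg
    simp only [Function.iterate_succ_apply', pow_succ', mul_assoc]
    exact h.one_add_le_smul_one_add (zero_le_one.trans (h.mapsTo_one_add.iterate k hf).1)
      (h.mapsTo_one_add.iterate k hg) (by positivity) ih

variable [CompactSpace X]

theorem iterate_one_add_sub_le (h : IsSubunitalConeMap A θ) {f g : C(X, ℝ)}
    (hf : f ∈ Icc 1 ((1 - θ)⁻¹ • 1)) (hg : g ∈ Icc 1 ((1 - θ)⁻¹ • 1)) (k : ℕ) (x : X) :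
    (fun f ↦ 1 + A f)^[k] f x - (fun f ↦ 1 + A f)^[k] g x ≤ (1 - θ)⁻¹ * dist f g * θ ^ k := by
  have hfg : f ≤ (1 + dist f g) • g := ContinuousMap.le_def.2 fun y ↦ by
    have sub_le : f y - g y ≤ dist f g := (le_abs_self _).trans (f.dist_apply_le_dist y)
    have le_mul : dist f g ≤ dist f g * g y := le_mul_of_one_le_right dist_nonneg (hg.1 y)
    simp only [ContinuousMap.smul_apply, smul_eq_mul]
    linarith
  have ratio_le : (fun f ↦ 1 + A f)^[k] f x ≤
      (1 + θ ^ k * dist f g) * (fun f ↦ 1 + A f)^[k] g x :=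
    h.iterate_one_add_le_smul hf hg dist_nonneg hfg k x
  have bound : (fun f ↦ 1 + A f)^[k] g x ≤ (1 - θ)⁻¹ := by
    simpa using (h.mapsTo_one_add.iterate k hg).2 x
  have hθ := h.nonneg
  calc _ ≤ θ ^ k * dist f g * (fun f ↦ 1 + A f)^[k] g x := by linarith
    _ ≤ θ ^ k * dist f g * (1 - θ)⁻¹ := by gcongr
    _ = _ := by ring

theorem dist_iterate_one_add_le (h : IsSubunitalConeMap A θ) {f g : C(X, ℝ)}
    (hf : f ∈ Icc 1 ((1 - θ)⁻¹ • 1)) (hg : g ∈ Icc 1 ((1 - θ)⁻¹ • 1)) (k : ℕ) :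
    dist ((fun f ↦ 1 + A f)^[k] f) ((fun f ↦ 1 + A f)^[k] g) ≤
      (1 - θ)⁻¹ * dist f g * θ ^ k := by
  have pos : 0 < 1 - θ := sub_pos.2 h.lt_one
  have hθ := h.nonneg
  refine (ContinuousMap.dist_le (by positivity)).2 fun x ↦ abs_sub_le_iff.2 ⟨?_, ?_⟩
  · exact h.iterate_one_add_sub_le hf hg k x
  · simpa only [dist_comm] using h.iterate_one_add_sub_le hg hf k x

theorem exists_one_add_eq (h : IsSubunitalConeMap A θ) : ∃ f, 1 ≤ f ∧ 1 + A f = f := by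
  set T : C(X, ℝ) → C(X, ℝ) := fun f ↦ 1 + A f
  have one_mem : 1 ∈ Icc (1 : C(X, ℝ)) ((1 - θ)⁻¹ • 1) := by
    refine ⟨le_rfl, ContinuousMap.le_def.2 fun x ↦ ?_⟩
    simpa using (one_le_inv₀ (sub_pos.2 h.lt_one)).2 (by linarith [h.nonneg])
  obtain ⟨f, hf⟩ : ∃ f, Tendsto (fun k ↦ T^[k] 1) atTop (nhds f) :=
    cauchySeq_tendsto_of_complete <| cauchySeq_of_le_geometric θ _ h.lt_one
      fun k ↦ h.dist_iterate_one_add_le one_mem (h.mapsTo_one_add one_mem) k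
  have eval (x : X) : Tendsto (fun k ↦ T^[k] 1 x) atTop (nhds (f x)) :=
    ((continuous_eval_const x).tendsto f).comp hf
  have f_mem : f ∈ Icc 1 ((1 - θ)⁻¹ • 1) :=
    ⟨fun x ↦ ge_of_tendsto' (eval x) fun k ↦ (h.mapsTo_one_add.iterate k one_mem).1 x,
      fun x ↦ le_of_tendsto' (eval x) fun k ↦ (h.mapsTo_one_add.iterate k one_mem).2 x⟩
  have tendsto_map : Tendsto (fun k ↦ T^[k + 1] 1) atTop (nhds (T f)) := by
    refine tendsto_iff_dist_tendsto_zero.2 (squeeze_zero (fun _ ↦ dist_nonneg) (fun k ↦ ?_)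
      (by simpa using ((tendsto_iff_dist_tendsto_zero.1 hf).const_mul (1 - θ)⁻¹).mul_const (θ ^ 1)))
    rw [Function.iterate_succ_apply']
    exact h.dist_iterate_one_add_le (h.mapsTo_one_add.iterate k one_mem) f_mem 1
  exact ⟨f, f_mem.1, tendsto_nhds_unique tendsto_map ((tendsto_add_atTop_iff_nat 1).2 hf)⟩

theorem le_of_smul_one_add_eq (h : IsSubunitalConeMap A θ) {f : C(X, ℝ)} (hf : 0 ≤ f) {c : ℝ}
    (hc : 0 ≤ c) (hfix : c • 1 + A f = f) : f ≤ (c * (1 - θ)⁻¹) • 1 := by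
  have map_le : A f ≤ (‖f‖ * θ) • 1 :=
    h.map_le_of_le_smul_one hf (norm_nonneg f) fun x ↦ by simpa using f.apply_le_norm x
  have apply_le (x : X) : f x ≤ c + ‖f‖ * θ := by
    conv_lhs => rw [← hfix]
    simpa using map_le x
  have hθ := h.nonneg
  have norm_le : ‖f‖ ≤ c + ‖f‖ * θ := (ContinuousMap.norm_le f (by positivity)).2 fun x ↦
    (Real.norm_of_nonneg (hf x)).trans_le (apply_le x)
  have norm_le' : ‖f‖ ≤ c * (1 - θ)⁻¹ := by
    rw [← div_eq_mul_inv, le_div_iff₀ (sub_pos.2 h.lt_one)]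
    linarith
  exact fun x ↦ by simpa using (f.apply_le_norm x).trans norm_le'

theorem eq_of_one_add_eq (h : IsSubunitalConeMap A θ) {f g : C(X, ℝ)} (hf : 0 ≤ f) (hg : 0 ≤ g)
    (hf_fix : 1 + A f = f) (hg_fix : 1 + A g = g) : f = g := by
  have mem {f : C(X, ℝ)} (hf : 0 ≤ f) (hfix : 1 + A f = f) : f ∈ Icc 1 ((1 - θ)⁻¹ • 1) := by
    refine ⟨hfix ▸ le_add_of_nonneg_right (h.map_nonneg hf), ?_⟩
    simpa only [one_mul] using
      h.le_of_smul_one_add_eq hf zero_le_one (by rwa [one_smul])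
  refine dist_le_zero.1 (ge_of_tendsto' (x := atTop)
    (f := fun k : ℕ ↦ (1 - θ)⁻¹ * dist f g * θ ^ k) ?_ fun k ↦ ?_)
  · simpa using (tendsto_pow_atTop_nhds_zero_of_lt_one h.nonneg h.lt_one).const_mul
      ((1 - θ)⁻¹ * dist f g)
  · have iterate_le := h.dist_iterate_one_add_le (mem hf hf_fix) (mem hg hg_fix) k
    rwa [Function.iterate_fixed hf_fix, Function.iterate_fixed hg_fix] at iterate_le

theorem pos_of_smul_one_add_eq (h : IsSubunitalConeMap A θ) {f : C(X, ℝ)} (hf : 0 ≤ f) {c : ℝ}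
    (hc : 0 ≤ c) (hfix : c • 1 + A f = f) {x : X} (hx : 0 < f x) : 0 < c := by
  have le : f x ≤ c * (1 - θ)⁻¹ := by simpa using h.le_of_smul_one_add_eq hf hc hfix x
  exact pos_of_mul_pos_left (hx.trans_le le) (inv_nonneg.2 (sub_pos.2 h.lt_one).le)

-- By homogeneity every solution with constant `c > 0` is `c` times the one with constant `1`.
theorem existsUnique_smul_one_add_eq (h : IsSubunitalConeMap A θ) (x : X) :
    ∃! f, 0 ≤ f ∧ f x = 1 ∧ ∃ c : ℝ, 0 ≤ c ∧ c • 1 + A f = f := by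
  obtain ⟨g, one_le_g, hg⟩ := h.exists_one_add_eq
  have g_nonneg : 0 ≤ g := zero_le_one.trans one_le_g
  have gx_pos : 0 < g x := zero_lt_one.trans_le (one_le_g x)
  have inv_nonneg : 0 ≤ (g x)⁻¹ := by positivity
  refine ⟨(g x)⁻¹ • g, ⟨smul_nonneg inv_nonneg g_nonneg, inv_mul_cancel₀ gx_pos.ne', (g x)⁻¹,
    inv_nonneg, ?_⟩, ?_⟩
  · rw [h.map_smul _ inv_nonneg g g_nonneg, ← smul_add, hg]
  · rintro f ⟨hf, fx, c, hc, hfix⟩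
    have c_pos : 0 < c := h.pos_of_smul_one_add_eq hf hc hfix (fx ▸ zero_lt_one)
    have c_inv_nonneg : 0 ≤ c⁻¹ := by positivity
    have normalized : 1 + A (c⁻¹ • f) = c⁻¹ • f := by
      rw [h.map_smul _ c_inv_nonneg f hf]
      conv_rhs => rw [← hfix, smul_add, inv_smul_smul₀ c_pos.ne']
    have eq_g : c⁻¹ • f = g :=
      h.eq_of_one_add_eq (smul_nonneg c_inv_nonneg hf) g_nonneg normalized hg
    have gx_eq : g x = c⁻¹ := by simp [← eq_g, fx]
    rw [gx_eq, ← eq_g, smul_smul, inv_inv, mul_inv_cancel₀ c_pos.ne', one_smul]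

end IsSubunitalConeMap

section PLaplacianPower

variable {p x y : ℝ}

theorem abs_rpow_sub_two_mul_self_of_nonneg (hp : 1 < p) (hx : 0 ≤ x) :
    |x| ^ (p - 2) * x = x ^ (p - 1) := by
  rw [abs_of_nonneg hx, ← rpow_add_one' hx (by linarith)]
  ring_nf

-- Split by sign, because `|x| ^ (p - 2)` is itself discontinuous at `0` when `p < 2`.
theorem continuous_abs_rpow_sub_two_mul_self (hp : 1 < p) :
    Continuous fun x : ℝ ↦ |x| ^ (p - 2) * x := by
  have split_sign (x : ℝ) :
      |x| ^ (p - 2) * x = max x 0 ^ (p - 1) - max (-x) 0 ^ (p - 1) := by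
    have zero_rpow : (0 : ℝ) ^ (p - 1) = 0 := Real.zero_rpow (by linarith)
    rcases le_total 0 x with hx | hx
    · rw [abs_rpow_sub_two_mul_self_of_nonneg hp hx, max_eq_left hx,
        max_eq_right (neg_nonpos.2 hx), zero_rpow, sub_zero]
    · rw [max_eq_right hx, max_eq_left (neg_nonneg.2 hx), zero_rpow, zero_sub,
        ← abs_rpow_sub_two_mul_self_of_nonneg hp (neg_nonneg.2 hx), abs_neg, mul_neg, neg_neg]
  simp only [split_sign]
  have hp' : 0 ≤ p - 1 := by linarith
  exact ((continuous_id.max continuous_const).rpow_const fun _ ↦ .inr hp').sub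
    ((continuous_neg.max continuous_const).rpow_const fun _ ↦ .inr hp')

theorem abs_rpow_sub_two_mul_self_eq_iff (hp : 1 < p) (hy : 0 ≤ y) :
    |x| ^ (p - 2) * x = y ↔ x = y ^ (p - 1)⁻¹ := by
  have hp' : p - 1 ≠ 0 := by linarith
  rcases le_or_gt 0 x with hx | hx
  · rw [abs_rpow_sub_two_mul_self_of_nonneg hp hx, Real.eq_rpow_inv hx hy hp']
  · have power_neg : |x| ^ (p - 2) * x < 0 :=
      mul_neg_of_pos_of_neg (rpow_pos_of_pos (abs_pos.2 hx.ne) _) hx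
    have root_nonneg : 0 ≤ y ^ (p - 1)⁻¹ := rpow_nonneg hy _
    constructor <;> intro <;> linarith

end PLaplacianPower

/-- The flux `t⁻ⁿ ∫₀ᵗ sⁿ w(s)^q ds` through the sphere of radius `t` in dimension `n + 1`, produced
by the source `w ^ q`. Substituting `s = t x` removes the singular factor, so that the formula makes
sense, and is continuous, at `t = 0`. -/
noncomputable def radialFlux (q : ℝ) (n : ℕ) (w : ℝ → ℝ) (t : ℝ) : ℝ :=
  t * ∫ x in (0 : ℝ)..1, x ^ n * w (t * x) ^ q

/-- The slope at radius `t` of the radial function `u` with `Δ_p u = w ^ q`, where `q = p - 1`. -/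
noncomputable def radialSlope (q : ℝ) (n : ℕ) (w : ℝ → ℝ) (t : ℝ) : ℝ :=
  radialFlux q n w t ^ q⁻¹

/-- The radial function `u` with `Δ_p u = w ^ q`, where `q = p - 1`, normalized by `u 0 = 0`. -/
noncomputable def radialPotential (q : ℝ) (n : ℕ) (w : ℝ → ℝ) (r : ℝ) : ℝ :=
  ∫ t in (0 : ℝ)..r, radialSlope q n w t

section RadialPotential

variable {q c r t : ℝ} {n : ℕ} {w v : ℝ → ℝ}

theorem pow_mul_radialFlux :
    t ^ n * radialFlux q n w t = ∫ s in (0 : ℝ)..t, s ^ n * w s ^ q := by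
  have substitution := intervalIntegral.mul_integral_comp_mul_left (a := 0) (b := 1)
    (f := fun s ↦ s ^ n * w s ^ q) t
  rw [mul_zero, mul_one] at substitution
  rw [← substitution, radialFlux, mul_left_comm, ← intervalIntegral.integral_const_mul]
  simp only [mul_pow, mul_assoc]

theorem continuous_radialFlux (hq : 0 ≤ q) (hw : Continuous w) :
    Continuous (radialFlux q n w) := by
  refine continuous_id.mul
    (intervalIntegral.continuous_parametric_intervalIntegral_of_continuous' ?_ 0 1)
  have source : Continuous fun z : ℝ × ℝ ↦ w (z.1 * z.2) ^ q :=
    (hw.comp continuous_mul).rpow_const fun _ ↦ .inr hq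
  exact (continuous_snd.pow n).mul source

theorem radialFlux_nonneg (hw : 0 ≤ w) (ht : 0 ≤ t) : 0 ≤ radialFlux q n w t :=
  mul_nonneg ht <| intervalIntegral.integral_nonneg zero_le_one fun _ hx ↦
    mul_nonneg (pow_nonneg hx.1 n) (rpow_nonneg (hw _) q)

theorem radialFlux_mono (hq : 0 ≤ q) (hwc : Continuous w) (hvc : Continuous v) (hw : 0 ≤ w)
    (hwv : w ≤ v) (ht : 0 ≤ t) : radialFlux q n w t ≤ radialFlux q n v t := by
  have integrable {u : ℝ → ℝ} (hu : Continuous u) :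
      IntervalIntegrable (fun x ↦ x ^ n * u (t * x) ^ q) MeasureTheory.volume 0 1 :=
    ((continuous_pow n).mul ((hu.comp (continuous_const_mul t)).rpow_const
      fun _ ↦ .inr hq)).intervalIntegrable 0 1
  refine mul_le_mul_of_nonneg_left (intervalIntegral.integral_mono_on zero_le_one
    (integrable hwc) (integrable hvc) fun x hx ↦ ?_) ht
  exact mul_le_mul_of_nonneg_left (rpow_le_rpow (hw _) (hwv _) hq) (pow_nonneg hx.1 n)

theorem radialFlux_smul (hc : 0 ≤ c) (hw : 0 ≤ w) :
    radialFlux q n (c • w) t = c ^ q * radialFlux q n w t := by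
  simp only [radialFlux, Pi.smul_apply, smul_eq_mul, mul_rpow hc (hw _), mul_left_comm _ (c ^ q),
    intervalIntegral.integral_const_mul]

theorem radialFlux_one : radialFlux q n 1 t = t / (n + 1) := by
  simp [radialFlux, div_eq_mul_inv]

theorem continuous_radialSlope (hq : 0 ≤ q) (hw : Continuous w) :
    Continuous (radialSlope q n w) :=
  (continuous_radialFlux hq hw).rpow_const fun _ ↦ .inr (inv_nonneg.2 hq)

theorem radialSlope_zero (hq : q ≠ 0) : radialSlope q n w 0 = 0 := by
  simp [radialSlope, radialFlux, zero_rpow (inv_ne_zero hq)]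

theorem radialSlope_nonneg (hw : 0 ≤ w) (ht : 0 ≤ t) : 0 ≤ radialSlope q n w t :=
  rpow_nonneg (radialFlux_nonneg hw ht) _

theorem radialSlope_mono (hq : 0 ≤ q) (hwc : Continuous w) (hvc : Continuous v) (hw : 0 ≤ w)
    (hwv : w ≤ v) (ht : 0 ≤ t) : radialSlope q n w t ≤ radialSlope q n v t :=
  rpow_le_rpow (radialFlux_nonneg hw ht) (radialFlux_mono hq hwc hvc hw hwv ht) (inv_nonneg.2 hq)

theorem radialSlope_smul (hq : q ≠ 0) (hc : 0 ≤ c) (hw : 0 ≤ w) (ht : 0 ≤ t) :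
    radialSlope q n (c • w) t = c * radialSlope q n w t := by
  rw [radialSlope, radialFlux_smul hc hw, mul_rpow (rpow_nonneg hc q) (radialFlux_nonneg hw ht),
    rpow_rpow_inv hc hq, radialSlope]

theorem radialSlope_one_le (hq : 0 ≤ q) (ht : 0 ≤ t) : radialSlope q n 1 t ≤ t ^ q⁻¹ := by
  rw [radialSlope, radialFlux_one]
  exact rpow_le_rpow (by positivity) (div_le_self ht (by linarith [n.cast_nonneg (α := ℝ)]))
    (inv_nonneg.2 hq)

theorem hasDerivAt_radialPotential (hq : 0 ≤ q) (hw : Continuous w) (r : ℝ) :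
    HasDerivAt (radialPotential q n w) (radialSlope q n w r) r :=
  ((continuous_radialSlope hq hw).integral_hasStrictDerivAt 0 r).hasDerivAt

theorem radialPotential_mono (hq : 0 ≤ q) (hwc : Continuous w) (hvc : Continuous v) (hw : 0 ≤ w)
    (hwv : w ≤ v) (hr : 0 ≤ r) : radialPotential q n w r ≤ radialPotential q n v r :=
  intervalIntegral.integral_mono_on hr
    ((continuous_radialSlope hq hwc).intervalIntegrable 0 r)
    ((continuous_radialSlope hq hvc).intervalIntegrable 0 r)
    fun _ ht ↦ radialSlope_mono hq hwc hvc hw hwv ht.1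

theorem radialPotential_smul (hq : q ≠ 0) (hc : 0 ≤ c) (hw : 0 ≤ w) (hr : 0 ≤ r) :
    radialPotential q n (c • w) r = c * radialPotential q n w r := by
  rw [radialPotential, radialPotential, ← intervalIntegral.integral_const_mul]
  refine intervalIntegral.integral_congr fun t ht ↦ ?_
  rw [uIcc_of_le hr] at ht
  exact radialSlope_smul hq hc hw ht.1

theorem radialPotential_one_le (hq : 0 < q) (hr : r ∈ Icc (0 : ℝ) 1) :
    radialPotential q n 1 r ≤ q / (q + 1) := by
  have root_continuous : Continuous fun t : ℝ ↦ t ^ q⁻¹ :=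
    continuous_id.rpow_const fun _ ↦ .inr (inv_nonneg.2 hq.le)
  calc radialPotential q n 1 r ≤ ∫ t in (0 : ℝ)..r, t ^ q⁻¹ :=
        intervalIntegral.integral_mono_on hr.1
          ((continuous_radialSlope hq.le continuous_one).intervalIntegrable 0 r)
          (root_continuous.intervalIntegrable 0 r) fun _ ht ↦ radialSlope_one_le hq.le ht.1
    _ = r ^ (q⁻¹ + 1) / (q⁻¹ + 1) := by
        have hq' : 0 < q⁻¹ := inv_pos.2 hq
        rw [integral_rpow (.inl (by linarith)), zero_rpow (by positivity), sub_zero]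
    _ ≤ 1 / (q⁻¹ + 1) := by
        gcongr
        exact rpow_le_one hr.1 hr.2 (by positivity)
    _ = q / (q + 1) := by
        field_simp
        rw [add_comm]

end RadialPotential

/-- `radialPotential` as an operator on continuous functions on `[0, 1]`; its argument is extended
to `ℝ` by its values at the endpoints. -/
noncomputable def radialPotentialMap {q : ℝ} (hq : 0 ≤ q) (n : ℕ) (f : C(unitInterval, ℝ)) :
    C(unitInterval, ℝ) where
  toFun r := radialPotential q n (IccExtend zero_le_one f) r
  continuous_toFun :=
    (continuous_iff_continuousAt.2 fun r ↦ (hasDerivAt_radialPotential hq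
      f.continuous.Icc_extend' r).continuousAt).comp continuous_subtype_val

theorem isSubunitalConeMap_radialPotentialMap {q : ℝ} (hq : 0 < q) (n : ℕ) :
    IsSubunitalConeMap (radialPotentialMap hq.le n) (q / (q + 1)) where
  monotoneOn f hf g _ hfg r :=
    radialPotential_mono hq.le f.continuous.Icc_extend' g.continuous.Icc_extend'
      (fun _ ↦ hf _) (fun _ ↦ hfg _) r.2.1
  map_smul c hc f hf :=
    ContinuousMap.ext fun r ↦ radialPotential_smul hq.ne' hc (fun _ ↦ hf _) r.2.1
  map_one_le r := (radialPotential_one_le hq r.2).trans_eq (mul_one _).symm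
  nonneg := by positivity
  lt_one := (div_lt_one (by positivity)).2 (lt_add_one q)

theorem hasDerivAt_pow_mul_abs_radialSlope {p r : ℝ} (hp : 1 < p) {n : ℕ} {w : ℝ → ℝ}
    (hwc : Continuous w) (hw : 0 ≤ w) (hr : 0 < r) :
    HasDerivAt
      (fun s ↦ s ^ n * (|radialSlope (p - 1) n w s| ^ (p - 2) * radialSlope (p - 1) n w s))
      (r ^ n * w r ^ (p - 1)) r := by
  have source_continuous : Continuous fun s ↦ s ^ n * w s ^ (p - 1) :=
    (continuous_pow n).mul (hwc.rpow_const fun _ ↦ .inr (by linarith))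
  refine (source_continuous.integral_hasStrictDerivAt 0 r).hasDerivAt.congr_of_eventuallyEq ?_
  filter_upwards [Ioi_mem_nhds hr] with s hs
  have flux_eq : |radialSlope (p - 1) n w s| ^ (p - 2) * radialSlope (p - 1) n w s =
      radialFlux (p - 1) n w s :=
    (abs_rpow_sub_two_mul_self_eq_iff hp (radialFlux_nonneg hw (le_of_lt hs))).2 rfl
  rw [flux_eq, pow_mul_radialFlux]

theorem isRadialDirichletLimit_radialSlope {p c : ℝ} (hp : 1 < p) {n : ℕ}
    {w : ℝ → ℝ} (hwc : Continuous w) (hw : 0 ≤ w) (hw1 : w 1 = 1)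
    (hfix : ∀ r ∈ Icc (0 : ℝ) 1, w r = c + radialPotential (p - 1) n w r) :
    IsRadialDirichletLimit p (n + 1) w (radialSlope (p - 1) n w) := by
  have hq : 0 < p - 1 := sub_pos.2 hp
  exact ⟨fun r hr ↦ ((hasDerivAt_radialPotential hq.le hwc r).const_add c).hasDerivWithinAt.congr
      hfix (hfix r hr),
    (continuous_radialSlope hq.le hwc).continuousOn, fun r _ ↦ hw r, hw1,
    radialSlope_zero hq.ne', fun _ hr ↦ hasDerivAt_pow_mul_abs_radialSlope hp hwc hw hr.1⟩

theorem isRadialDirichletLimit_IccExtend {p c : ℝ} (hp : 1 < p) {n : ℕ} {f : C(unitInterval, ℝ)}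
    (hf : 0 ≤ f) (hf1 : f 1 = 1) (hfix : c • 1 + radialPotentialMap (sub_pos.2 hp).le n f = f) :
    IsRadialDirichletLimit p (n + 1) (IccExtend zero_le_one f)
      (radialSlope (p - 1) n (IccExtend zero_le_one f)) := by
  refine isRadialDirichletLimit_radialSlope (c := c) hp f.continuous.Icc_extend'
    (fun _ ↦ hf _) ((IccExtend_right _ _).trans hf1) fun r hr ↦ ?_
  rw [IccExtend_of_mem _ _ hr]
  conv_lhs => rw [← hfix]
  simp [radialPotentialMap]

namespace IsRadialDirichletLimit

variable {p r : ℝ} {n : ℕ} {G G' w : ℝ → ℝ}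

theorem pow_mul_abs_deriv_eq_integral (h : IsRadialDirichletLimit p (n + 1) G G') (hp : 1 < p)
    (hwc : Continuous w) (hGw : EqOn G w (Icc 0 1)) (hr : r ∈ Icc (0 : ℝ) 1) :
    r ^ n * (|G' r| ^ (p - 2) * G' r) = ∫ s in (0 : ℝ)..r, s ^ n * w s ^ (p - 1) := by
  obtain ⟨-, hG'c, -, -, hG'0, hode⟩ := h
  have source_continuous : Continuous fun s ↦ s ^ n * w s ^ (p - 1) :=
    (continuous_pow n).mul (hwc.rpow_const fun _ ↦ .inr (by linarith))
  have flux_continuousOn : ContinuousOn (fun s ↦ s ^ n * (|G' s| ^ (p - 2) * G' s)) (Icc 0 1) :=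
    (continuousOn_pow n).mul ((continuous_abs_rpow_sub_two_mul_self hp).comp_continuousOn hG'c)
  rw [intervalIntegral.integral_eq_sub_of_hasDerivAt_of_le hr.1
    (flux_continuousOn.mono (Icc_subset_Icc_right hr.2)) (fun s hs ↦ ?_)
    (source_continuous.intervalIntegrable 0 r)]
  · simp only [hG'0, mul_zero, sub_zero]
  · have hs' : s ∈ Ioo (0 : ℝ) 1 := ⟨hs.1, hs.2.trans_le hr.2⟩
    simpa only [hGw (Ioo_subset_Icc_self hs'), Nat.add_sub_cancel] using hode s hs'

theorem deriv_eq_radialSlope (h : IsRadialDirichletLimit p (n + 1) G G') (hp : 1 < p)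
    (hwc : Continuous w) (hw : 0 ≤ w) (hGw : EqOn G w (Icc 0 1)) (hr : r ∈ Icc (0 : ℝ) 1) :
    G' r = radialSlope (p - 1) n w r := by
  have ⟨_, _, _, _, G'_zero, _⟩ := h
  rcases hr.1.eq_or_lt with rfl | r_pos
  · rw [G'_zero, radialSlope_zero (sub_pos.2 hp).ne']
  · have flux_eq : |G' r| ^ (p - 2) * G' r = radialFlux (p - 1) n w r := by
      refine mul_left_cancel₀ (pow_pos r_pos n).ne' ?_
      rw [h.pow_mul_abs_deriv_eq_integral hp hwc hGw hr, pow_mul_radialFlux]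
    exact (abs_rpow_sub_two_mul_self_eq_iff hp (radialFlux_nonneg hw hr.1)).1 flux_eq

theorem eq_add_radialPotential (h : IsRadialDirichletLimit p (n + 1) G G') (hp : 1 < p)
    (hwc : Continuous w) (hw : 0 ≤ w) (hGw : EqOn G w (Icc 0 1)) (hr : r ∈ Icc (0 : ℝ) 1) :
    G r = G 0 + radialPotential (p - 1) n w r := by
  have hq : 0 ≤ p - 1 := (sub_pos.2 hp).le
  rw [radialPotential, intervalIntegral.integral_eq_sub_of_hasDerivAt_of_le hr.1 (f := G)
    (hwc.continuousOn.congr (hGw.mono (Icc_subset_Icc_right hr.2))) (fun t ht ↦ ?_)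
    ((continuous_radialSlope hq hwc).intervalIntegrable 0 r), add_sub_cancel]
  have ht' : t ∈ Ioo (0 : ℝ) 1 := ⟨ht.1, ht.2.trans_le hr.2⟩
  rw [← h.deriv_eq_radialSlope hp hwc hw hGw (Ioo_subset_Icc_self ht')]
  exact (h.1 t (Ioo_subset_Icc_self ht')).hasDerivAt (Icc_mem_nhds ht'.1 ht'.2)

theorem exists_eqOn_IccExtend {N : ℕ} (h : IsRadialDirichletLimit p N G G') :
    ∃ f : C(unitInterval, ℝ), 0 ≤ f ∧ EqOn G (IccExtend zero_le_one f) (Icc 0 1) := by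
  obtain ⟨hG, -, G_nonneg, -⟩ := h
  have G_continuousOn : ContinuousOn G (Icc 0 1) := fun r hr ↦ (hG r hr).continuousWithinAt
  refine ⟨⟨(Icc 0 1).domRestrict G, G_continuousOn.domRestrict⟩, fun r ↦ G_nonneg r r.2,
    fun r hr ↦ ?_⟩
  rw [IccExtend_of_mem _ _ hr]
  rfl

theorem smul_one_add_radialPotentialMap_eq (h : IsRadialDirichletLimit p (n + 1) G G')
    (hp : 1 < p) {f : C(unitInterval, ℝ)} (hf : 0 ≤ f)
    (hGf : EqOn G (IccExtend zero_le_one f) (Icc 0 1)) :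
    G 0 • 1 + radialPotentialMap (sub_pos.2 hp).le n f = f := by
  ext r
  have f_eq : f r = G r := by rw [hGf r.2, IccExtend_val]
  rw [f_eq, h.eq_add_radialPotential hp f.continuous.Icc_extend' (fun _ ↦ hf _) hGf r.2]
  simp [radialPotentialMap]

theorem monotoneOn (h : IsRadialDirichletLimit p (n + 1) G G') (hp : 1 < p) :
    MonotoneOn G (Icc 0 1) := by
  obtain ⟨f, hf, hGf⟩ := h.exists_eqOn_IccExtend
  refine monotoneOn_of_hasDerivWithinAt_nonneg (convex_Icc 0 1)
    (fun r hr ↦ (h.1 r hr).continuousWithinAt)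
    (fun r hr ↦ (h.1 r (interior_subset hr)).mono interior_subset) fun r hr ↦ ?_
  rw [h.deriv_eq_radialSlope hp f.continuous.Icc_extend' (fun _ ↦ hf _) hGf (interior_subset hr)]
  exact radialSlope_nonneg (fun _ ↦ hf _) (interior_subset hr).1

end IsRadialDirichletLimit

theorem stmt_14_general (p : ℝ) (hp : 1 < p) (N : ℕ) (hN : 1 ≤ N) :
    ∃ G G' : ℝ → ℝ,
      IsRadialDirichletLimit p N G G' ∧
      MonotoneOn G (Icc (0 : ℝ) 1) ∧
      ∀ H H' : ℝ → ℝ, IsRadialDirichletLimit p N H H' →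
        ∀ r ∈ Icc (0 : ℝ) 1, H r = G r := by
  obtain ⟨n, rfl⟩ := Nat.exists_eq_add_of_le' hN
  obtain ⟨f, ⟨hf, hf1, c, -, hfix⟩, unique⟩ :=
    (isSubunitalConeMap_radialPotentialMap (sub_pos.2 hp) n).existsUnique_smul_one_add_eq 1
  have solution := isRadialDirichletLimit_IccExtend hp hf hf1 hfix
  refine ⟨_, _, solution, solution.monotoneOn hp, fun H H' h r hr ↦ ?_⟩
  have ⟨_, _, H_nonneg, H_one, _⟩ := h
  obtain ⟨g, hg, hHg⟩ := h.exists_eqOn_IccExtend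
  have hg1 : g 1 = 1 := by
    rw [← H_one, hHg (right_mem_Icc.2 zero_le_one), IccExtend_right]
    rfl
  rw [hHg hr, unique g ⟨hg, hg1, H 0, H_nonneg 0 (left_mem_Icc.2 zero_le_one),
    h.smul_one_add_radialPotentialMap_eq hp hg hHg⟩]

theorem stmt_14 (p : ℝ) (hp : 2 < p) (N : ℕ) (hN : 1 ≤ N) :
    ∃ G G' : ℝ → ℝ,
      IsRadialDirichletLimit p N G G' ∧
      MonotoneOn G (Icc (0:ℝ) 1) ∧
      ∀ H H' : ℝ → ℝ, IsRadialDirichletLimit p N H H' →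
        ∀ r ∈ Icc (0:ℝ) 1, H r = G r :=
  stmt_14_general p (one_lt_two.trans hp) N hN
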